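/- Let I be a monomial ideal of R = K[x_1,…,x_n] that is not a principal ideal. Then reg(R/I) ≥ reg(R/sgn(I)). -/

import Mathlib

open MvPolynomial

/-- The monomial ideal of `R = K[x_1,…,x_n]` generated by the monomials `x^{v j}`,
`j = 1, …, q`, with exponent vectors `v j ∈ ℕ^n`. -/
noncomputable def monIdeal (K : Type) [Field K] {n q : ℕ} (v : Fin q → Fin n →₀ ℕ) :
    Ideal (MvPolynomial (Fin n) K) :=
  Ideal.span (Set.range fun j => monomial (v j) (1 : K))

/-- The exponent vectors `v j` are pairwise non-comparable in the componentwise order,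
i.e. the corresponding monomials form an anti-chain under divisibility.  Equivalently,
`{x^{v j}}` is the (unique) minimal monomial generating set `G(I)` of the monomial ideal
`I` it generates. -/
def AntichainFam {n q : ℕ} (v : Fin q → Fin n →₀ ℕ) : Prop :=
  ∀ j k : Fin q, v j ≤ v k → j = k

/-- The signature of the family `v` of exponent vectors (the columns of the incidence
matrix `A`): for each row `i`, the `(i,j)` entry of the signature matrix is the position
of `A i j = v j i` in the ascending list of the distinct entries of the `i`-th row of `A`,
i.e. the number of distinct values in row `i` that are strictly smaller than `v j i`.
The columns of the resulting matrix are the exponent vectors of the generators of the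
signature ideal `sgn(I) = monIdeal K (sgnExp v)`. -/
noncomputable def sgnExp {n q : ℕ} (v : Fin q → Fin n →₀ ℕ) : Fin q → Fin n →₀ ℕ :=
  fun j => Finsupp.equivFunOnFinite.symm fun i =>
    ((Finset.univ.image fun k : Fin q => v k i).filter fun m => m < v j i).card

/-- Basis (index) type of the `k`-th free module `F_k = ⊕_j R(-j)^{b k j}` of a graded
free resolution: a basis element is a pair `(j, t)` where `j` is its degree shift. -/
def resBas (b : ℕ → ℕ → ℕ) (k : ℕ) : Type := Σ j : ℕ, Fin (b k j)

/-- The `R`-linear map `(α →₀ R) → (β →₀ R)` determined by the matrix whose row at the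
basis element `e : α` is `D e`. -/
noncomputable def resMap {R : Type*} [CommRing R] {α β : Type*}
    (D : α → (β →₀ R)) : (α →₀ R) →ₗ[R] (β →₀ R) :=
  Finsupp.linearCombination R D

/-- A minimal graded free resolution `0 → F_g → ⋯ → F_1 → F_0 = R → R/I → 0` of `R/I`
over the standard graded polynomial ring `R = K[x_1,…,x_n]`, where
`F_k = ⊕_j R(-j)^{b k j}`.  The differentials are graded of degree `0`: the matrix entry
from a basis element with shift `j` to one with shift `j'` is homogeneous of degree
`j - j'`; minimality holds since all (nonzero) entries have `j' < j`, hence positive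
degree, i.e. lie in the graded maximal ideal. -/
structure MinFreeRes (K : Type) [Field K] (n : ℕ)
    (I : Ideal (MvPolynomial (Fin n) K)) where
  /-- the length `g` of the resolution -/
  len : ℕ
  /-- the graded Betti numbers: `F_k = ⊕_j R(-j)^{b k j}` -/
  b : ℕ → ℕ → ℕ
  /-- `F_0 = R` (one copy, no shift) -/
  hb0 : ∀ j, b 0 j = if j = 0 then 1 else 0
  /-- the resolution stops at homological degree `len` -/
  htop : ∀ k, len < k → ∀ j, b k j = 0
  /-- there are only finitely many nonzero Betti numbers -/
  hfin : (Function.support fun kj : ℕ × ℕ => b kj.1 kj.2).Finite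
  /-- the matrices of the differentials `d_{k+1} : F_{k+1} → F_k` -/
  D : ∀ k : ℕ, resBas b (k + 1) → (resBas b k →₀ MvPolynomial (Fin n) K)
  /-- gradedness and minimality of the differentials -/
  hhom : ∀ k e e', D k e e' = 0 ∨
    (e'.1 < e.1 ∧ (D k e e').IsHomogeneous (e.1 - e'.1))
  /-- exactness at `F_k` for `k ≥ 1`; taking `k = len` this also forces injectivity of
  the last differential, since `F_k = 0` for `k > len` -/
  hexact : ∀ k, LinearMap.range (resMap (D (k + 1))) = LinearMap.ker (resMap (D k))
  /-- exactness at `F_0`, the augmentation `F_0 = R → R/I` being the quotient map -/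
  hexact0 : LinearMap.range (resMap (D 0)) =
    LinearMap.ker (Finsupp.linearCombination (MvPolynomial (Fin n) K)
      (fun _ : resBas b 0 => (1 : MvPolynomial (Fin n) K ⧸ I)))

/-- The Castelnuovo–Mumford regularity of `R/I`, computed from a minimal graded free
resolution: `reg(R/I) = max { j - k : b k j ≠ 0 }`. -/
noncomputable def MinFreeRes.reg {K : Type} [Field K] {n : ℕ}
    {I : Ideal (MvPolynomial (Fin n) K)} (F : MinFreeRes K n I) : ℤ :=
  sSup { d : ℤ | ∃ k j : ℕ, F.b k j ≠ 0 ∧ d = (j : ℤ) - (k : ℤ) }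

/-!
The signature of a family of exponent vectors is undone by a strictly increasing relabelling of the
exponents of each variable, and any such relabelling `g` can only increase the regularity. By
dimension shifting along a minimal resolution, the Betti number `b (p + 1) j` of `R/I` vanishes
exactly when the Koszul homology of `I` does in homological degree `p` and internal degree `j`. That
homology splits over the multidegrees `α` of total degree `j` into the homology of the upper Koszul
complexes `K^α(I)`, whose faces are determined by the truth values of the inequalities
`v k i + ε ≤ α i` with `ε ∈ {0, 1}`. Since `g` preserves these, `K^β` before the relabelling is
`K^{g(β)}` after it. As `m ≤ g m` for every strictly increasing `g` on `ℕ`, every nonzero Betti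
number yields one after the relabelling, in the same homological degree and in the same or a larger
internal degree.
-/

namespace SignatureRegularity

open Finset

section Chains

variable {σ M N : Type*} [AddCommGroup M] [AddCommGroup N]

/-- The Koszul `p`-chains with coefficients in `M`: a function `c : Finset σ → M` supported on sets
of size `p` stands for `∑ S, e_S ⊗ c S`, and the coefficient at `e_S` is required to lie in the
prescribed subgroup `L S`. -/
def koszulChains (L : Finset σ → AddSubgroup M) (p : ℕ) : AddSubgroup (Finset σ → M) :=
  AddSubgroup.pi Set.univ fun S => if #S = p then L S else ⊥

variable {L : Finset σ → AddSubgroup M} {p : ℕ}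

lemma mem_koszulChains_iff {c : Finset σ → M} :
    c ∈ koszulChains L p ↔ ∀ S, c S ≠ 0 → #S = p ∧ c S ∈ L S := by
  simp only [koszulChains, AddSubgroup.mem_pi, Set.mem_univ, true_imp_iff]
  refine forall_congr' fun S => ?_
  by_cases hc : c S = 0
  · simp [hc, zero_mem]
  · split_ifs with hS <;> simp [hc, hS]

lemma apply_mem_of_mem_koszulChains {c : Finset σ → M} (hc : c ∈ koszulChains L p)
    (S : Finset σ) : c S ∈ L S := by
  by_cases h : c S = 0
  · exact h ▸ zero_mem _
  · exact (mem_koszulChains_iff.1 hc S h).2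

lemma apply_eq_zero_of_mem_koszulChains {c : Finset σ → M} (hc : c ∈ koszulChains L p)
    {S : Finset σ} (hS : #S ≠ p) : c S = 0 :=
  of_not_not fun h => hS (mem_koszulChains_iff.1 hc S h).1

lemma comp_mem_koszulChains {L' : Finset σ → AddSubgroup N} {φ : M →+ N} {c : Finset σ → M}
    (hφ : ∀ S, ∀ m ∈ L S, φ m ∈ L' S) (hc : c ∈ koszulChains L p) :
    φ ∘ c ∈ koszulChains L' p := by
  refine mem_koszulChains_iff.2 fun S hS => ?_
  obtain ⟨hp, hL⟩ := mem_koszulChains_iff.1 hc S (ne_zero_of_map hS)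
  exact ⟨hp, hφ S _ hL⟩

lemma mem_koszulChains_map_iff {φ : M →+ N} {c : Finset σ → N} :
    c ∈ koszulChains (fun S => (L S).map φ) p ↔ ∃ c' ∈ koszulChains L p, φ ∘ c' = c := by
  constructor
  · intro hc
    have hlift (S : Finset σ) : ∃ m, (m ≠ 0 → #S = p ∧ m ∈ L S) ∧ φ m = c S := by
      by_cases h : c S = 0
      · exact ⟨0, by simp [h]⟩
      · obtain ⟨hS, m, hm, hmc⟩ := mem_koszulChains_iff.1 hc S h
        exact ⟨m, fun _ => ⟨hS, hm⟩, hmc⟩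
    choose c' hc' hφ using hlift
    exact ⟨c', mem_koszulChains_iff.2 hc', funext hφ⟩
  · rintro ⟨c', hc', rfl⟩
    exact comp_mem_koszulChains (fun S m hm => ⟨m, hm, rfl⟩) hc'

lemma mem_koszulChains_inf_ker_iff {φ : M →+ N} {c : Finset σ → M} :
    c ∈ koszulChains (fun S => L S ⊓ φ.ker) p ↔ c ∈ koszulChains L p ∧ φ ∘ c = 0 := by
  simp only [mem_koszulChains_iff, AddSubgroup.mem_inf, AddMonoidHom.mem_ker, funext_iff,
    Function.comp_apply, Pi.zero_apply, ← forall_and]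
  refine forall_congr' fun S => ?_
  by_cases h : c S = 0
  · simp [h]
  · simp [h, and_assoc]

end Chains

section Koszul

variable {σ : Type*} [LinearOrder σ]

/-- The sign with which `e_{S ∪ {i}}` contributes to `e_S` in the Koszul differential: `-1` to the
position of `i` in `S ∪ {i}`. -/
def koszulSign (S : Finset σ) (i : σ) : ℤ := (-1) ^ #{l ∈ S | l < i}

lemma koszulSign_mul_self (S : Finset σ) (i : σ) : koszulSign S i * koszulSign S i = 1 :=
  pow_mul_pow_eq_one _ (by norm_num)

lemma koszulSign_insert {S : Finset σ} {i : σ} (hi : i ∉ S) (l : σ) :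
    koszulSign (insert i S) l = if i < l then -koszulSign S l else koszulSign S l := by
  unfold koszulSign
  rw [filter_insert]
  split_ifs
  · rw [card_insert_of_notMem (by simp [hi]), pow_succ, mul_neg_one]
  · rfl

lemma koszulSign_mul_koszulSign_insert {S : Finset σ} {i l : σ} (hi : i ∉ S) (hl : l ∉ S)
    (hil : i ≠ l) :
    koszulSign S i * koszulSign (insert i S) l = -(koszulSign S l * koszulSign (insert l S) i) := by
  rw [koszulSign_insert hi, koszulSign_insert hl]
  rcases hil.lt_or_gt with h | h <;> simp [h, h.not_gt, mul_comm]

lemma koszulSign_insert_mul_koszulSign_insert {S : Finset σ} {i l : σ} (hi : i ∉ S) (hl : l ∉ S)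
    (hil : i ≠ l) :
    koszulSign (insert i S) l * koszulSign (insert l S) i = -(koszulSign S i * koszulSign S l) := by
  rw [koszulSign_insert hi, koszulSign_insert hl]
  rcases hil.lt_or_gt with h | h <;> simp [h, h.not_gt, mul_comm]

variable {M : Type*} [AddCommGroup M]

/-- Exterior multiplication by `e_i` on Koszul chains. -/
def koszulWedge (i : σ) (c : Finset σ → M) (S : Finset σ) : M :=
  if i ∈ S then koszulSign (S.erase i) i • c (S.erase i) else 0

lemma koszulWedge_insert {i : σ} {S : Finset σ} (hi : i ∉ S) (c : Finset σ → M) :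
    koszulWedge i c (insert i S) = koszulSign S i • c S := by
  simp [koszulWedge, hi]

lemma koszulWedge_of_notMem {i : σ} {S : Finset σ} (hi : i ∉ S) (c : Finset σ → M) :
    koszulWedge i c S = 0 :=
  if_neg hi

variable [Fintype σ] {A N : Type*} [CommRing A] [Module A M] [AddCommGroup N] [Module A N]

/-- The differential of the Koszul complex `⋀(A^σ) ⊗ M` of a family `x` of ring elements. -/
def koszulD (x : σ → A) : (Finset σ → M) →ₗ[A] (Finset σ → M) :=
  LinearMap.pi fun S => ∑ i ∈ Sᶜ, koszulSign S i • x i • LinearMap.proj (insert i S)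

lemma koszulD_apply (x : σ → A) (c : Finset σ → M) (S : Finset σ) :
    koszulD x c S = ∑ i ∈ Sᶜ, koszulSign S i • x i • c (insert i S) := by
  simp [koszulD]

lemma koszulD_linearMap_comp (x : σ → A) (φ : M →ₗ[A] N) (c : Finset σ → M) :
    koszulD x (φ ∘ c) = φ ∘ koszulD x c := by
  ext S
  simp [koszulD_apply]

lemma koszulD_koszulD (x : σ → A) (c : Finset σ → M) : koszulD x (koszulD x c) = 0 := by
  ext S
  simp only [koszulD_apply, smul_sum, Pi.zero_apply]
  rw [sum_sigma']
  refine sum_involution (fun a _ => ⟨a.2, a.1⟩) ?_ ?_ ?_ fun _ _ => rfl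
  all_goals
    rintro ⟨i, l⟩ h
    simp only [mem_sigma, mem_compl, mem_insert, not_or] at h
    obtain ⟨hi, hli, hl⟩ := h
  · rw [insert_comm l i S, smul_comm (x i) (koszulSign (insert i S) l),
      smul_comm (x l) (koszulSign (insert l S) i), smul_smul, smul_smul, smul_smul, smul_smul,
      koszulSign_mul_koszulSign_insert hi hl (Ne.symm hli), mul_comm (x i) (x l), neg_smul,
      neg_add_cancel]
  · intro _ heq
    exact hli (congrArg Sigma.fst heq)
  · simp [hi, hl, Ne.symm hli]

lemma koszulD_koszulWedge_add (x : σ → A) (i : σ) (c : Finset σ → M) :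
    koszulD x (koszulWedge i c) + koszulWedge i (koszulD x c) = x i • c := by
  ext S
  rw [Pi.add_apply, Pi.smul_apply]
  by_cases hiS : i ∈ S
  · obtain ⟨T, hi, rfl⟩ : ∃ T, i ∉ T ∧ S = insert i T :=
      ⟨S.erase i, by simp, (insert_erase hiS).symm⟩
    rw [koszulWedge_insert hi, koszulD_apply, koszulD_apply,
      ← insert_erase (mem_compl.2 hi), ← compl_insert, sum_insert (by simp), smul_add, smul_smul,
      koszulSign_mul_self, one_smul, add_left_comm, smul_sum, ← sum_add_distrib]
    refine add_eq_left.2 (sum_eq_zero fun l hl => ?_)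
    obtain ⟨hli, hl⟩ : l ≠ i ∧ l ∉ T := by simpa using hl
    rw [insert_comm, koszulWedge_insert (by simp [hli.symm, hi]), smul_comm (x l), smul_smul,
      smul_smul, koszulSign_insert_mul_koszulSign_insert hi hl hli.symm, neg_smul, neg_add_cancel]
  · rw [koszulWedge_of_notMem hiS, add_zero, koszulD_apply, sum_eq_single i]
    · rw [koszulWedge_insert hiS, smul_comm (x i), smul_smul, koszulSign_mul_self, one_smul]
    · intro l _ hli
      rw [koszulWedge_of_notMem (by simp [hiS, hli.symm]), smul_zero, smul_zero]
    · simp [hiS]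

/-- Exactness in homological degree `p` of the part of the Koszul complex cut out by the subgroups
`L S`, that is, vanishing of its `p`-th homology. -/
def KoszulExactAt (x : σ → A) (L : Finset σ → AddSubgroup M) (p : ℕ) : Prop :=
  ∀ c ∈ koszulChains L p, koszulD x c = 0 → ∃ b ∈ koszulChains L (p + 1), koszulD x b = c

variable {x : σ → A} {L : Finset σ → AddSubgroup M} {p : ℕ} {c : Finset σ → M}

lemma koszulD_mem_koszulChains (hx : ∀ S, ∀ i ∉ S, ∀ m ∈ L (insert i S), x i • m ∈ L S)
    (hc : c ∈ koszulChains L (p + 1)) : koszulD x c ∈ koszulChains L p := by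
  refine mem_koszulChains_iff.2 fun S hS => ?_
  rw [koszulD_apply] at hS ⊢
  refine ⟨?_, sum_mem fun i hi => zsmul_mem
    (hx S i (mem_compl.1 hi) _ (apply_mem_of_mem_koszulChains hc _)) _⟩
  obtain ⟨i, hi, hne⟩ := exists_ne_zero_of_sum_ne_zero hS
  have hcard : #(insert i S) = p + 1 := by
    by_contra h
    simp [apply_eq_zero_of_mem_koszulChains hc h] at hne
  rwa [card_insert_of_notMem (mem_compl.1 hi), add_left_inj] at hcard

lemma koszulD_eq_zero_of_mem_koszulChains_zero (hc : c ∈ koszulChains L 0) :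
    koszulD x c = 0 := by
  ext S
  rw [koszulD_apply]
  refine sum_eq_zero fun i _ => ?_
  rw [apply_eq_zero_of_mem_koszulChains hc (by simp), smul_zero, smul_zero]

lemma KoszulExactAt.map_zero (φ : M →ₗ[A] N) (h : KoszulExactAt x L 0) :
    KoszulExactAt x (fun S => (L S).map φ.toAddMonoidHom) 0 := by
  intro c hc _
  obtain ⟨w, hw, rfl⟩ := mem_koszulChains_map_iff.1 hc
  obtain ⟨b, hb, rfl⟩ := h w hw (koszulD_eq_zero_of_mem_koszulChains_zero hw)
  exact ⟨φ ∘ b, mem_koszulChains_map_iff.2 ⟨b, hb, rfl⟩, koszulD_linearMap_comp x φ b⟩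

-- The dimension shift `H_{p+1}(φ(L)) ≅ H_p(L ∩ ker φ)`, from the long exact homology sequence of
-- `0 → L ∩ ker φ → L → φ(L) → 0`.
lemma koszulExactAt_map_succ_iff (φ : M →ₗ[A] N)
    (hx : ∀ S, ∀ i ∉ S, ∀ m ∈ L (insert i S), x i • m ∈ L S)
    (hL : KoszulExactAt x L (p + 1))
    (hker : ∀ c ∈ koszulChains (fun S => L S ⊓ φ.toAddMonoidHom.ker) p, koszulD x c = 0 →
      ∃ b ∈ koszulChains L (p + 1), koszulD x b = c) :
    KoszulExactAt x (fun S => (L S).map φ.toAddMonoidHom) (p + 1) ↔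
      KoszulExactAt x (fun S => L S ⊓ φ.toAddMonoidHom.ker) p := by
  constructor
  · intro h c hc hc0
    obtain ⟨w, hw, rfl⟩ := hker c hc hc0
    have hφw : koszulD x (φ ∘ w) = 0 :=
      (koszulD_linearMap_comp x φ w).trans (mem_koszulChains_inf_ker_iff.1 hc).2
    obtain ⟨u, hu, hud⟩ := h _ (mem_koszulChains_map_iff.2 ⟨w, hw, rfl⟩) hφw
    obtain ⟨t, ht, rfl⟩ := mem_koszulChains_map_iff.1 hu
    have hφt : φ ∘ koszulD x t = φ ∘ w := (koszulD_linearMap_comp x φ t).symm.trans hud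
    refine ⟨w - koszulD x t, mem_koszulChains_inf_ker_iff.2
      ⟨sub_mem hw (koszulD_mem_koszulChains hx ht), funext fun S => ?_⟩, ?_⟩
    · simpa [sub_eq_zero] using (congrFun hφt S).symm
    · rw [map_sub, koszulD_koszulD, sub_zero]
  · intro h c hc hc0
    obtain ⟨w, hw, rfl⟩ := mem_koszulChains_map_iff.1 hc
    have hφw : φ ∘ koszulD x w = 0 := (koszulD_linearMap_comp x φ w).symm.trans hc0
    obtain ⟨b, hb, hbw⟩ := h (koszulD x w)
      (mem_koszulChains_inf_ker_iff.2 ⟨koszulD_mem_koszulChains hx hw, hφw⟩) (koszulD_koszulD x w)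
    obtain ⟨hb, hφb⟩ := mem_koszulChains_inf_ker_iff.1 hb
    obtain ⟨d, hd, hdw⟩ := hL (w - b) (sub_mem hw hb) (by rw [map_sub, hbw, sub_self])
    refine ⟨φ ∘ d, mem_koszulChains_map_iff.2 ⟨d, hd, rfl⟩, ?_⟩
    have hφd : koszulD x (φ ∘ d) = φ ∘ (w - b) := by rw [koszulD_linearMap_comp, hdw]
    refine hφd.trans (funext fun S => ?_)
    simpa using (congrFun hφb S)

end Koszul

section Multidegree

variable {σ : Type*}

/-- The exponent vector of the squarefree monomial `∏ i ∈ S, x_i`. -/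
noncomputable def squarefreeExp (S : Finset σ) : σ →₀ ℕ :=
  ∑ i ∈ S, Finsupp.single i 1

lemma squarefreeExp_apply [DecidableEq σ] (S : Finset σ) (i : σ) :
    squarefreeExp S i = if i ∈ S then 1 else 0 := by
  simp [squarefreeExp, Finsupp.finsetSum_apply, Finsupp.single_apply]

lemma squarefreeExp_insert [DecidableEq σ] {S : Finset σ} {i : σ} (hi : i ∉ S) :
    squarefreeExp (insert i S) = Finsupp.single i 1 + squarefreeExp S :=
  sum_insert hi

lemma degree_squarefreeExp (S : Finset σ) : (squarefreeExp S).degree = #S := by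
  simp [squarefreeExp]

/-- The faces of the upper Koszul simplicial complex `K^α(I)` of Miller and Sturmfels, for `U` the
set of exponents of the monomials in `I`: the sets `S` such that `x^α / ∏ i ∈ S, x_i` lies in `I`.
It is stated without subtraction of exponents, which would truncate. -/
def upperKoszul (U : Set (σ →₀ ℕ)) (α : σ →₀ ℕ) : Set (Finset σ) :=
  {S | ∃ u ∈ U, u + squarefreeExp S = α}

lemma squarefreeExp_le_of_mem_upperKoszul {U : Set (σ →₀ ℕ)} {α : σ →₀ ℕ} {S : Finset σ}
    (hS : S ∈ upperKoszul U α) : squarefreeExp S ≤ α := by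
  obtain ⟨u, _, rfl⟩ := hS
  exact le_add_self

lemma mem_upperKoszul_univ_iff {α : σ →₀ ℕ} {S : Finset σ} :
    S ∈ upperKoszul Set.univ α ↔ squarefreeExp S ≤ α :=
  ⟨squarefreeExp_le_of_mem_upperKoszul, fun h => ⟨_, trivial, tsub_add_cancel_of_le h⟩⟩

/-- The coefficient subgroups cutting the chain complex of a simplicial complex `Δ` out of the
Koszul complex of the family `1`. The homology of these chains is that of `Δ`, reduced and with
indices raised by one since they are graded by cardinality instead of dimension. -/
def faceCoeffs (M : Type*) [AddCommGroup M] (Δ : Set (Finset σ)) (S : Finset σ) : AddSubgroup M :=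
  ⨅ _ : S ∉ Δ, ⊥

lemma mem_koszulChains_faceCoeffs_iff {M : Type*} [AddCommGroup M] {Δ : Set (Finset σ)} {p : ℕ}
    {c : Finset σ → M} :
    c ∈ koszulChains (faceCoeffs M Δ) p ↔ ∀ S, c S ≠ 0 → #S = p ∧ S ∈ Δ := by
  refine mem_koszulChains_iff.trans (forall₂_congr fun S hS => and_congr_right' ?_)
  simp [faceCoeffs, AddSubgroup.mem_iInf, hS]

lemma koszulExactAt_faceCoeffs_of_cone [LinearOrder σ] [Fintype σ] {A M : Type*} [CommRing A]
    [AddCommGroup M] [Module A M] {Δ : Set (Finset σ)} {i : σ} (hΔ : ∀ S ∈ Δ, insert i S ∈ Δ)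
    (p : ℕ) : KoszulExactAt (1 : σ → A) (faceCoeffs M Δ) p := by
  intro c hc hc0
  refine ⟨koszulWedge i c, mem_koszulChains_faceCoeffs_iff.2 fun S hS => ?_, ?_⟩
  · obtain ⟨T, hi, rfl⟩ : ∃ T, i ∉ T ∧ S = insert i T := by
      refine ⟨S.erase i, by simp, (insert_erase ?_).symm⟩
      exact of_not_not fun hiS => hS (koszulWedge_of_notMem hiS c)
    rw [koszulWedge_insert hi] at hS
    obtain ⟨hT, hTΔ⟩ := mem_koszulChains_faceCoeffs_iff.1 hc T (right_ne_zero_of_smul hS)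
    exact ⟨by rw [card_insert_of_notMem hi, hT], hΔ T hTΔ⟩
  · have hwedge : koszulWedge i (0 : Finset σ → M) = 0 := by
      ext S
      simp [koszulWedge]
    simpa [hc0, hwedge] using koszulD_koszulWedge_add (1 : σ → A) i c

variable {K : Type*} [CommRing K]

/-- The component of a Koszul chain over `K[x]` in multidegree `α`, where `x^a e_S` has multidegree
`a + squarefreeExp S`. -/
noncomputable def multiComponent (α : σ →₀ ℕ) :
    (Finset σ → MvPolynomial σ K) →ₗ[K] (Finset σ → K) :=
  open Classical in
  LinearMap.pi fun S =>
    if squarefreeExp S ≤ α then lcoeff K (α - squarefreeExp S) ∘ₗ LinearMap.proj S else 0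

lemma multiComponent_add_squarefreeExp (a : σ →₀ ℕ) (c : Finset σ → MvPolynomial σ K)
    (S : Finset σ) : multiComponent (a + squarefreeExp S) c S = coeff a (c S) := by
  simp [multiComponent]

lemma multiComponent_of_not_le {α : σ →₀ ℕ} {S : Finset σ} (h : ¬ squarefreeExp S ≤ α)
    (c : Finset σ → MvPolynomial σ K) : multiComponent α c S = 0 := by
  simp [multiComponent, h]

lemma exists_of_multiComponent_ne_zero {α : σ →₀ ℕ} {c : Finset σ → MvPolynomial σ K}
    {S : Finset σ} (h : multiComponent α c S ≠ 0) :
    ∃ a, a + squarefreeExp S = α ∧ coeff a (c S) ≠ 0 := by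
  have hS : squarefreeExp S ≤ α := of_not_not fun hS => h (multiComponent_of_not_le hS c)
  obtain ⟨a, rfl⟩ := le_iff_exists_add'.1 hS
  exact ⟨a, rfl, by rwa [multiComponent_add_squarefreeExp] at h⟩

lemma ext_multiComponent {c d : Finset σ → MvPolynomial σ K}
    (h : ∀ α, multiComponent α c = multiComponent α d) : c = d := by
  ext S a
  rw [← multiComponent_add_squarefreeExp, ← multiComponent_add_squarefreeExp, h]

lemma coeff_X_mul_eq_multiComponent_insert [DecidableEq σ] {S : Finset σ} {i : σ} (hi : i ∉ S)
    (a : σ →₀ ℕ) (c : Finset σ → MvPolynomial σ K) :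
    coeff a (X i * c (insert i S)) = multiComponent (a + squarefreeExp S) c (insert i S) := by
  by_cases ha : Finsupp.single i 1 ≤ a
  · obtain ⟨b, rfl⟩ := exists_add_of_le ha
    rw [coeff_X_mul, add_comm (Finsupp.single i 1) b, add_assoc, ← squarefreeExp_insert hi,
      multiComponent_add_squarefreeExp]
  · rw [Finsupp.single_le_iff] at ha
    rw [coeff_X_mul', if_neg (by rwa [Finsupp.mem_support_iff, ← Nat.one_le_iff_ne_zero]),
      multiComponent_of_not_le]
    exact fun hle => ha (by simpa [squarefreeExp_apply, hi] using hle i)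

lemma multiComponent_koszulD [LinearOrder σ] [Fintype σ] (α : σ →₀ ℕ)
    (c : Finset σ → MvPolynomial σ K) :
    multiComponent α (koszulD (X : σ → MvPolynomial σ K) c) =
      koszulD (1 : σ → K) (multiComponent α c) := by
  ext S
  by_cases hS : squarefreeExp S ≤ α
  · obtain ⟨a, rfl⟩ := le_iff_exists_add'.1 hS
    rw [multiComponent_add_squarefreeExp, koszulD_apply, koszulD_apply, coeff_sum]
    refine sum_congr rfl fun i hi => ?_
    rw [Pi.one_apply, one_smul, smul_eq_mul, ← lcoeff_apply (R := K), map_zsmul, lcoeff_apply,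
      coeff_X_mul_eq_multiComponent_insert (mem_compl.1 hi)]
  · rw [multiComponent_of_not_le hS, koszulD_apply]
    refine (sum_eq_zero fun i hi => ?_).symm
    rw [multiComponent_of_not_le, smul_zero, smul_zero]
    rw [squarefreeExp_insert (mem_compl.1 hi)]
    exact fun h => hS (le_add_self.trans h)

/-- The Koszul chain over `K[x]` concentrated in multidegree `α` with component `a` there. Only the
values `a S` with `squarefreeExp S ≤ α` are meaningful. -/
noncomputable def ofMultiComponent (α : σ →₀ ℕ) (a : Finset σ → K) (S : Finset σ) :
    MvPolynomial σ K :=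
  monomial (α - squarefreeExp S) (a S)

lemma multiComponent_ofMultiComponent [DecidableEq σ] {α : σ →₀ ℕ} {a : Finset σ → K}
    (ha : ∀ S, a S ≠ 0 → squarefreeExp S ≤ α) (β : σ →₀ ℕ) :
    multiComponent β (ofMultiComponent α a) = if β = α then a else 0 := by
  ext S
  by_cases hS : squarefreeExp S ≤ β
  · obtain ⟨b, rfl⟩ := le_iff_exists_add'.1 hS
    rw [multiComponent_add_squarefreeExp, ofMultiComponent, coeff_monomial, ite_apply]
    by_cases haS : a S = 0
    · simp [haS]
    · obtain ⟨b', rfl⟩ := le_iff_exists_add'.1 (ha S haS)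
      simp [eq_comm]
  · rw [multiComponent_of_not_le hS]
    split_ifs with hβ
    · exact (of_not_not fun haS => hS (hβ ▸ ha S haS)).symm
    · rfl

/-- The coefficient subgroups cutting out of the Koszul complex of the variables `X` the strand of
total degree `j` with coefficients in the span of the monomials with exponents in `U`; here `e_S`
has degree `#S`. -/
noncomputable def monomialPart (K : Type*) [CommRing K] (U : Set (σ →₀ ℕ)) (j : ℕ) (S : Finset σ) :
    AddSubgroup (MvPolynomial σ K) :=
  (restrictSupport K {a ∈ U | a.degree + #S = j}).toAddSubgroup

lemma mem_monomialPart_iff {U : Set (σ →₀ ℕ)} {j : ℕ} {S : Finset σ} {f : MvPolynomial σ K} :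
    f ∈ monomialPart K U j S ↔ ∀ a, coeff a f ≠ 0 → a ∈ U ∧ a.degree + #S = j := by
  simp [monomialPart, mem_restrictSupport_iff, Set.subset_def]

variable {U : Set (σ →₀ ℕ)} {j p : ℕ} {c : Finset σ → MvPolynomial σ K}

lemma mem_koszulChains_monomialPart_iff :
    c ∈ koszulChains (monomialPart K U j) p ↔ ∀ α, multiComponent α c ≠ 0 →
      α.degree = j ∧ multiComponent α c ∈ koszulChains (faceCoeffs K (upperKoszul U α)) p := by
  simp only [mem_koszulChains_faceCoeffs_iff]
  simp only [mem_koszulChains_iff, mem_monomialPart_iff]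
  constructor
  · intro hc α hα
    have hc' (S : Finset σ) (hS : multiComponent α c S ≠ 0) :
        α.degree = j ∧ #S = p ∧ S ∈ upperKoszul U α := by
      obtain ⟨a, rfl, ha⟩ := exists_of_multiComponent_ne_zero hS
      obtain ⟨hp, hcS⟩ := hc S (ne_zero_of_map (f := lcoeff K a) ha)
      obtain ⟨haU, hj⟩ := hcS a ha
      exact ⟨by rw [map_add, degree_squarefreeExp, hj], hp, a, haU, rfl⟩
    obtain ⟨S, hS⟩ := Function.ne_iff.1 hα
    exact ⟨(hc' S hS).1, fun T hT => (hc' T hT).2⟩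
  · intro hc S hS
    have hc' (a : σ →₀ ℕ) (ha : coeff a (c S) ≠ 0) : #S = p ∧ a ∈ U ∧ a.degree + #S = j := by
      rw [← multiComponent_add_squarefreeExp] at ha
      obtain ⟨hj, hface⟩ := hc _ (Function.ne_iff.2 ⟨S, ha⟩)
      obtain ⟨hp, u, hu, hua⟩ := hface S ha
      rw [map_add, degree_squarefreeExp] at hj
      exact ⟨hp, add_right_cancel hua ▸ hu, hj⟩
    obtain ⟨a, ha⟩ := ne_zero_iff.1 hS
    exact ⟨(hc' a ha).1, fun a ha => (hc' a ha).2⟩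

lemma multiComponent_mem_koszulChains (hc : c ∈ koszulChains (monomialPart K U j) p)
    (α : σ →₀ ℕ) :
    multiComponent α c ∈ koszulChains (faceCoeffs K (upperKoszul U α)) p := by
  by_cases h : multiComponent α c = 0
  · exact h ▸ zero_mem _
  · exact (mem_koszulChains_monomialPart_iff.1 hc α h).2

lemma multiComponent_ofMultiComponent_of_mem [DecidableEq σ] {α : σ →₀ ℕ} {a : Finset σ → K}
    (ha : a ∈ koszulChains (faceCoeffs K (upperKoszul U α)) p) (β : σ →₀ ℕ) :
    multiComponent β (ofMultiComponent α a) = if β = α then a else 0 :=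
  multiComponent_ofMultiComponent (fun S hS =>
    squarefreeExp_le_of_mem_upperKoszul (mem_koszulChains_faceCoeffs_iff.1 ha S hS).2) β

lemma ofMultiComponent_mem_koszulChains {α : σ →₀ ℕ} {a : Finset σ → K}
    (ha : a ∈ koszulChains (faceCoeffs K (upperKoszul U α)) p) :
    ofMultiComponent α a ∈ koszulChains (monomialPart K U α.degree) p := by
  classical
  refine mem_koszulChains_monomialPart_iff.2 fun β hβ => ?_
  rw [multiComponent_ofMultiComponent_of_mem ha] at hβ ⊢
  obtain ⟨rfl, _⟩ := ite_ne_right_iff.1 hβ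
  exact ⟨rfl, by rwa [if_pos rfl]⟩

variable [LinearOrder σ] [Fintype σ]

lemma exists_koszulD_eq_of_forall_multiComponent (hc : c ∈ koszulChains (monomialPart K U j) p)
    (h : ∀ α, α.degree = j → ∃ b ∈ koszulChains (faceCoeffs K (upperKoszul U α)) (p + 1),
      koszulD (1 : σ → K) b = multiComponent α c) :
    ∃ b ∈ koszulChains (monomialPart K U j) (p + 1), koszulD (X : σ → MvPolynomial σ K) b = c := by
  choose! B hB hBc using h
  have hdeg {α : σ →₀ ℕ} : α ∈ univ.finsuppAntidiag j ↔ α.degree = j := by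
    simp [mem_finsuppAntidiag, Finsupp.degree_eq_sum]
  refine ⟨∑ α ∈ univ.finsuppAntidiag j, ofMultiComponent α (B α), sum_mem fun α hα => ?_,
    ext_multiComponent fun β => ?_⟩
  · obtain rfl := hdeg.1 hα
    exact ofMultiComponent_mem_koszulChains (hB α rfl)
  · have hsum : multiComponent β (∑ α ∈ univ.finsuppAntidiag j, ofMultiComponent α (B α)) =
        if β.degree = j then B β else 0 := by
      rw [map_sum, sum_congr rfl fun α hα =>
        multiComponent_ofMultiComponent_of_mem (hB α (hdeg.1 hα)) β, sum_ite_eq]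
      exact if_congr hdeg rfl rfl
    rw [multiComponent_koszulD, hsum]
    split_ifs with hβ
    · exact hBc β hβ
    · rw [map_zero]
      exact (of_not_not fun hne => hβ (mem_koszulChains_monomialPart_iff.1 hc β hne).1).symm

theorem koszulExactAt_monomialPart_iff :
    KoszulExactAt (X : σ → MvPolynomial σ K) (monomialPart K U j) p ↔
      ∀ α, α.degree = j → KoszulExactAt (1 : σ → K) (faceCoeffs K (upperKoszul U α)) p := by
  constructor
  · rintro h α rfl c hc hc0
    have hcycle : koszulD (X : σ → MvPolynomial σ K) (ofMultiComponent α c) = 0 := by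
      refine ext_multiComponent fun β => ?_
      rw [multiComponent_koszulD, multiComponent_ofMultiComponent_of_mem hc, map_zero]
      split_ifs
      exacts [hc0, map_zero _]
    obtain ⟨b, hb, hbc⟩ := h _ (ofMultiComponent_mem_koszulChains hc) hcycle
    refine ⟨multiComponent α b, multiComponent_mem_koszulChains hb α, ?_⟩
    rw [← multiComponent_koszulD, hbc, multiComponent_ofMultiComponent_of_mem hc, if_pos rfl]
  · intro h c hc hc0
    refine exists_koszulD_eq_of_forall_multiComponent hc fun α hα =>
      h α hα _ (multiComponent_mem_koszulChains hc α) ?_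
    rw [← multiComponent_koszulD, hc0, map_zero]

lemma exists_koszulD_eq_of_coeff_zero (hc : c ∈ koszulChains (monomialPart K Set.univ j) p)
    (hc0 : koszulD (X : σ → MvPolynomial σ K) c = 0) (hcoeff : coeff 0 (c ∅) = 0) :
    ∃ b ∈ koszulChains (monomialPart K Set.univ j) (p + 1),
      koszulD (X : σ → MvPolynomial σ K) b = c := by
  refine exists_koszulD_eq_of_forall_multiComponent hc fun α hα => ?_
  obtain rfl | hα0 := eq_or_ne α 0
  · refine ⟨0, zero_mem _, ?_⟩
    rw [map_zero, eq_comm]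
    ext S
    by_contra hne
    obtain ⟨a, ha, hcoeffa⟩ := exists_of_multiComponent_ne_zero hne
    obtain ⟨rfl, hS⟩ := add_eq_zero.1 ha
    have hS : S = ∅ := by rw [← card_eq_zero, ← degree_squarefreeExp, hS, map_zero]
    exact hcoeffa (hS ▸ hcoeff)
  · obtain ⟨i, hi⟩ := Finsupp.ne_iff.1 hα0
    refine koszulExactAt_faceCoeffs_of_cone (i := i) (fun S hS => ?_) p _
      (multiComponent_mem_koszulChains hc α) (by rw [← multiComponent_koszulD, hc0, map_zero])
    rw [mem_upperKoszul_univ_iff] at hS ⊢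
    intro l
    obtain rfl | hl := eq_or_ne l i
    · simpa [squarefreeExp_apply, Nat.one_le_iff_ne_zero] using hi
    · simpa [squarefreeExp_apply, hl] using hS l

end Multidegree

section FreeModule

variable {σ ι κ K : Type*} [CommRing K]

/-- The elements of the graded free module `⨁ e, R(-deg e)` over `R = K[x]` all of whose terms
`x^a e` have degree `a.degree + deg e` in `P`. -/
noncomputable def degreePart (K : Type*) [CommRing K] (deg : ι → ℕ) (P : Set ℕ) :
    AddSubgroup (ι →₀ MvPolynomial σ K) :=
  ⨅ e, (restrictSupport K {a | a.degree + deg e ∈ P}).toAddSubgroup.comap (Finsupp.applyAddHom e)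

variable {deg : ι → ℕ} {deg' : κ → ℕ} {P : Set ℕ}

lemma mem_degreePart_iff {f : ι →₀ MvPolynomial σ K} :
    f ∈ degreePart K deg P ↔ ∀ e a, coeff a (f e) ≠ 0 → a.degree + deg e ∈ P := by
  simp [degreePart, AddSubgroup.mem_iInf, mem_restrictSupport_iff, Set.subset_def]

lemma single_mem_degreePart {e : ι} {f : MvPolynomial σ K}
    (hf : ∀ a, coeff a f ≠ 0 → a.degree + deg e ∈ P) :
    Finsupp.single e f ∈ degreePart K deg P := by
  classical
  refine mem_degreePart_iff.2 fun e' a ha => ?_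
  rw [Finsupp.single_apply] at ha
  split_ifs at ha with h
  · exact h ▸ hf a ha
  · exact absurd (coeff_zero a) ha

lemma degreePart_sup_degreePart_compl :
    degreePart K deg P ⊔ degreePart K deg Pᶜ = (⊤ : AddSubgroup (ι →₀ MvPolynomial σ K)) := by
  classical
  refine (AddSubgroup.eq_top_iff' _).2 fun f => ?_
  induction f using Finsupp.induction_linear with
  | zero => exact zero_mem _
  | add f g hf hg => exact add_mem hf hg
  | single e f =>
    induction f using MvPolynomial.induction_on' with
    | monomial a r =>
      have hdeg (b : σ →₀ ℕ) (hb : coeff b (monomial a r) ≠ 0) : a = b :=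
        of_not_not fun h => hb (by rw [coeff_monomial, if_neg h])
      by_cases ha : a.degree + deg e ∈ P
      · exact AddSubgroup.mem_sup_left (single_mem_degreePart fun b hb => hdeg b hb ▸ ha)
      · exact AddSubgroup.mem_sup_right (single_mem_degreePart fun b hb => hdeg b hb ▸ ha)
    | add f g hf hg => rw [Finsupp.single_add]; exact add_mem hf hg

lemma eq_zero_of_mem_degreePart_of_mem_degreePart_compl {f : ι →₀ MvPolynomial σ K}
    (hf : f ∈ degreePart K deg P) (hf' : f ∈ degreePart K deg Pᶜ) : f = 0 := by
  ext e a
  by_contra h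
  exact mem_degreePart_iff.1 hf' e a h (mem_degreePart_iff.1 hf e a h)

lemma map_degreePart (φ : (ι →₀ MvPolynomial σ K) →+ (κ →₀ MvPolynomial σ K))
    (hφ : ∀ P, ∀ f ∈ degreePart K deg P, φ f ∈ degreePart K deg' P) :
    (degreePart K deg P).map φ = degreePart K deg' P ⊓ φ.range := by
  refine le_antisymm (le_inf ?_ (AddSubgroup.map_le_range φ _)) ?_
  · rintro _ ⟨f, hf, rfl⟩
    exact hφ P f hf
  · rintro _ ⟨hmem, f, rfl⟩
    obtain ⟨g, hg, h, hh, rfl⟩ := AddSubgroup.mem_sup.1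
      (degreePart_sup_degreePart_compl (K := K) (deg := deg) (P := P) ▸ AddSubgroup.mem_top f)
    have hφh : φ h = 0 := by
      refine eq_zero_of_mem_degreePart_of_mem_degreePart_compl (P := P) ?_ (hφ _ h hh)
      rw [map_add] at hmem
      exact (add_mem_cancel_left (hφ P g hg)).1 hmem
    exact ⟨g, hg, by rw [map_add, hφh, add_zero]⟩

lemma linearCombination_mem_degreePart {D : ι → κ →₀ MvPolynomial σ K}
    (hD : ∀ e, D e ∈ degreePart K deg' {deg e}) {f : ι →₀ MvPolynomial σ K}
    (hf : f ∈ degreePart K deg P) :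
    Finsupp.linearCombination (MvPolynomial σ K) D f ∈ degreePart K deg' P := by
  classical
  rw [Finsupp.linearCombination_apply]
  refine sum_mem fun e _ => mem_degreePart_iff.2 fun e' a ha => ?_
  rw [Finsupp.smul_apply, smul_eq_mul, coeff_mul] at ha
  obtain ⟨⟨b, c⟩, hbc, hne⟩ := exists_ne_zero_of_sum_ne_zero ha
  have hc : c.degree + deg' e' = deg e :=
    mem_degreePart_iff.1 (hD e) e' c (right_ne_zero_of_mul hne)
  rw [← mem_antidiagonal.1 hbc, map_add, add_assoc, hc]
  exact mem_degreePart_iff.1 hf e b (left_ne_zero_of_mul hne)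

lemma coeff_zero_linearCombination {D : ι → κ →₀ MvPolynomial σ K}
    (hD : ∀ e e', coeff 0 (D e e') = 0) (f : ι →₀ MvPolynomial σ K) (e' : κ) :
    coeff 0 (Finsupp.linearCombination (MvPolynomial σ K) D f e') = 0 := by
  rw [Finsupp.linearCombination_apply, Finsupp.sum, Finsupp.finsetSum_apply, coeff_sum]
  refine sum_eq_zero fun e _ => ?_
  rw [Finsupp.smul_apply, smul_eq_mul, ← constantCoeff_eq, map_mul, constantCoeff_eq, hD, mul_zero]

/-- The coefficient subgroups cutting out of the Koszul complex of the variables `X` the strand of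
total degree `j` with coefficients in `⨁ e, R(-deg e)`; here `e_S` has degree `#S`. -/
noncomputable def koszulStrand (K : Type*) [CommRing K] (deg : ι → ℕ) (j : ℕ) (S : Finset σ) :
    AddSubgroup (ι →₀ MvPolynomial σ K) :=
  degreePart K deg {d | d + #S = j}

variable {j p : ℕ}

lemma mem_koszulStrand_iff {S : Finset σ} {f : ι →₀ MvPolynomial σ K} :
    f ∈ koszulStrand K deg j S ↔ ∀ e a, coeff a (f e) ≠ 0 → a.degree + deg e + #S = j :=
  mem_degreePart_iff

lemma lsingle_comp_mem_koszulChains {d : ℕ} {b : Finset σ → MvPolynomial σ K}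
    (hb : b ∈ koszulChains (monomialPart K Set.univ d) p) (e : ι) :
    Finsupp.lsingle (R := MvPolynomial σ K) e ∘ b ∈
      koszulChains (koszulStrand K deg (d + deg e)) p := by
  refine comp_mem_koszulChains (φ := Finsupp.singleAddHom e) (fun S m hm => ?_) hb
  refine single_mem_degreePart fun a ha => ?_
  rw [Set.mem_ofPred_eq, ← (mem_monomialPart_iff.1 hm a ha).2, add_right_comm]

lemma lapply_comp_mem_koszulChains {c : Finset σ → ι →₀ MvPolynomial σ K}
    (hc : c ∈ koszulChains (koszulStrand K deg j) p) (e : ι) :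
    Finsupp.lapply (R := MvPolynomial σ K) e ∘ c ∈
      koszulChains (monomialPart K Set.univ (j - deg e)) p := by
  refine comp_mem_koszulChains (φ := Finsupp.applyAddHom e) (fun S m hm => ?_) hc
  refine mem_monomialPart_iff.2 fun a ha => ⟨trivial, ?_⟩
  have := mem_koszulStrand_iff.1 hm e a ha
  lia

lemma X_smul_mem_koszulStrand [DecidableEq σ] (S : Finset σ) (i : σ) (hi : i ∉ S)
    (f : ι →₀ MvPolynomial σ K) (hf : f ∈ koszulStrand K deg j (insert i S)) :
    (X i : MvPolynomial σ K) • f ∈ koszulStrand K deg j S := by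
  refine mem_koszulStrand_iff.2 fun e a ha => ?_
  rw [Finsupp.smul_apply, smul_eq_mul, coeff_X_mul', ite_ne_right_iff] at ha
  have hb := mem_koszulStrand_iff.1 hf e _ ha.2
  rw [card_insert_of_notMem hi] at hb
  have hle : Finsupp.single i 1 ≤ a :=
    Finsupp.single_le_iff.2 (Nat.one_le_iff_ne_zero.2 (Finsupp.mem_support_iff.1 ha.1))
  rw [← tsub_add_cancel_of_le hle, map_add, Finsupp.degree_single]
  lia

variable [LinearOrder σ] [Fintype σ]

lemma exists_koszulD_eq_of_forall_coeff_zero {c : Finset σ → ι →₀ MvPolynomial σ K}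
    (hc : c ∈ koszulChains (koszulStrand K deg j) p)
    (hc0 : koszulD (X : σ → MvPolynomial σ K) c = 0) (hcoeff : ∀ e, coeff 0 (c ∅ e) = 0) :
    ∃ b ∈ koszulChains (koszulStrand K deg j) (p + 1),
      koszulD (X : σ → MvPolynomial σ K) b = c := by
  classical
  have hcomp (e : ι) : ∃ b ∈ koszulChains (monomialPart K Set.univ (j - deg e)) (p + 1),
      koszulD (X : σ → MvPolynomial σ K) b = Finsupp.lapply (R := MvPolynomial σ K) e ∘ c := by
    refine exists_koszulD_eq_of_coeff_zero (lapply_comp_mem_koszulChains hc e) ?_ (hcoeff e)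
    rw [koszulD_linearMap_comp, hc0]
    rfl
  choose B hB hBc using hcomp
  let E : Finset ι := univ.biUnion fun S => (c S).support
  refine ⟨∑ e ∈ E, Finsupp.lsingle (R := MvPolynomial σ K) e ∘ B e, sum_mem fun e he => ?_, ?_⟩
  · have hdeg : j - deg e + deg e = j := by
      obtain ⟨S, -, hS⟩ := mem_biUnion.1 he
      have hcS := apply_mem_of_mem_koszulChains hc S
      obtain ⟨a, ha⟩ := ne_zero_iff.1 (Finsupp.mem_support_iff.1 hS)
      have := mem_koszulStrand_iff.1 hcS e a ha
      lia
    exact hdeg ▸ lsingle_comp_mem_koszulChains (hB e) e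
  · simp only [map_sum, koszulD_linearMap_comp, hBc]
    ext1 S
    rw [Finset.sum_apply]
    refine .trans ?_ (Finsupp.sum_single (c S))
    exact (Finsupp.sum_of_support_subset _ (subset_biUnion_of_mem (fun S => (c S).support)
      (mem_univ S)) _ fun _ _ => Finsupp.single_zero _).symm

variable {N : Type*} [AddCommGroup N] [Module (MvPolynomial σ K) N]
  (φ : (ι →₀ MvPolynomial σ K) →ₗ[MvPolynomial σ K] N)

lemma coeff_zero_koszulD (c : Finset σ → MvPolynomial σ K) (S : Finset σ) :
    coeff 0 (koszulD (X : σ → MvPolynomial σ K) c S) = 0 := by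
  simp [koszulD_apply, ← constantCoeff_eq]

theorem koszulExactAt_map_koszulStrand_zero_iff [Nontrivial K]
    (hφ : ∀ f, φ f = 0 → ∀ e, coeff 0 (f e) = 0) :
    KoszulExactAt (X : σ → MvPolynomial σ K)
      (fun S => (koszulStrand K deg j S).map φ.toAddMonoidHom) 0 ↔
      ∀ e, deg e ≠ j := by
  constructor
  · rintro h e rfl
    let c : Finset σ → N := Pi.single ∅ (φ (Finsupp.single e 1))
    have hc : c ∈ koszulChains
        (fun S => (koszulStrand K deg (deg e) S).map φ.toAddMonoidHom) 0 := by
      refine mem_koszulChains_iff.2 fun S hS => ?_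
      obtain rfl : S = ∅ := of_not_not fun h => hS (Pi.single_eq_of_ne h _)
      refine ⟨card_empty, Finsupp.single e 1, single_mem_degreePart fun a ha => ?_, by simp [c]⟩
      obtain rfl : 0 = a := of_not_not fun h => ha (by rw [coeff_one, if_neg h])
      simp
    obtain ⟨b, hb, hbc⟩ := h c hc (koszulD_eq_zero_of_mem_koszulChains_zero hc)
    obtain ⟨t, -, rfl⟩ := mem_koszulChains_map_iff.1 hb
    have hker : φ (koszulD (X : σ → MvPolynomial σ K) t ∅ - Finsupp.single e 1) = 0 := by
      have := congrFun ((koszulD_linearMap_comp _ φ t).symm.trans hbc) ∅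
      rw [map_sub, sub_eq_zero]
      simpa [c] using this
    have hconst := hφ _ hker e
    have hD : coeff 0 (koszulD (X : σ → MvPolynomial σ K) t ∅ e) = 0 := by
      rw [← coeff_zero_koszulD (Finsupp.lapply (R := MvPolynomial σ K) e ∘ t) ∅,
        koszulD_linearMap_comp]
      rfl
    simp [hD] at hconst
  · refine fun hdeg => KoszulExactAt.map_zero φ fun c hc hc0 =>
      exists_koszulD_eq_of_forall_coeff_zero hc hc0 fun e => ?_
    by_contra hne
    have hj := mem_koszulStrand_iff.1 (apply_mem_of_mem_koszulChains hc ∅) e 0 hne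
    exact hdeg e (by simpa using hj)

theorem koszulExactAt_map_koszulStrand_succ_iff
    (hφ : ∀ f, φ f = 0 → ∀ e, coeff 0 (f e) = 0) :
    KoszulExactAt (X : σ → MvPolynomial σ K)
      (fun S => (koszulStrand K deg j S).map φ.toAddMonoidHom) (p + 1) ↔
      KoszulExactAt (X : σ → MvPolynomial σ K)
        (fun S => koszulStrand K deg j S ⊓ φ.toAddMonoidHom.ker) p := by
  refine koszulExactAt_map_succ_iff φ X_smul_mem_koszulStrand ?_ ?_
  · intro c hc hc0
    refine exists_koszulD_eq_of_forall_coeff_zero hc hc0 fun e => ?_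
    rw [apply_eq_zero_of_mem_koszulChains hc (by simp), Finsupp.zero_apply, coeff_zero]
  · intro c hc hc0
    refine exists_koszulD_eq_of_forall_coeff_zero (mem_koszulChains_inf_ker_iff.1 hc).1 hc0 ?_
    exact hφ _ (apply_mem_of_mem_koszulChains hc ∅).2

end FreeModule

section MonomialIdeal

variable {σ κ : Type*} {v w : κ → σ →₀ ℕ}

lemma mem_upperKoszul_upperClosure_range_iff {α : σ →₀ ℕ} {S : Finset σ} :
    S ∈ upperKoszul (upperClosure (Set.range v) : Set _) α ↔
      ∃ k, v k + squarefreeExp S ≤ α := by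
  simp only [upperKoszul, Set.mem_ofPred_eq, SetLike.mem_coe, mem_upperClosure,
    Set.exists_range_iff]
  constructor
  · rintro ⟨u, ⟨k, hk⟩, rfl⟩
    exact ⟨k, add_le_add_left hk _⟩
  · rintro ⟨k, hk⟩
    obtain ⟨d, rfl⟩ := exists_add_of_le hk
    exact ⟨v k + d, ⟨k, le_self_add⟩, add_right_comm _ _ _⟩

lemma upperKoszul_eq_of_strictMono {g : σ → ℕ → ℕ} (hg : ∀ i, StrictMono (g i))
    (hgw : ∀ k i, g i (w k i) = v k i) {α β : σ →₀ ℕ} (hα : ∀ i, g i (β i) = α i) :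
    upperKoszul (upperClosure (Set.range w) : Set _) β =
      upperKoszul (upperClosure (Set.range v) : Set _) α := by
  classical
  ext S
  simp only [mem_upperKoszul_upperClosure_range_iff, Finsupp.le_def, Finsupp.add_apply,
    squarefreeExp_apply, ← hgw, ← hα]
  refine exists_congr fun k => forall_congr' fun i => ?_
  split_ifs
  · exact (hg i).lt_iff_lt.symm
  · exact (hg i).le_iff_le.symm

lemma exists_strictMono_apply_card_filter_lt (V : Finset ℕ) :
    ∃ g : ℕ → ℕ, StrictMono g ∧ ∀ m ∈ V, g #{u ∈ V | u < m} = m := by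
  classical
  have hinf : (Set.ofPred fun m => m ∈ V ∨ V.sup id < m).Infinite :=
    (Set.Ioi_infinite (V.sup id)).mono fun m hm => .inr hm
  -- `g` enumerates `V` and then all numbers above its maximum.
  refine ⟨Nat.nth fun m => m ∈ V ∨ V.sup id < m, Nat.nth_strictMono hinf, fun m hm => ?_⟩
  have hcount : #{u ∈ V | u < m} = Nat.count (fun m => m ∈ V ∨ V.sup id < m) m := by
    rw [Nat.count_eq_card_filter_range]
    congr 1
    ext u
    have hle : m ≤ V.sup id := le_sup (f := id) hm
    simp only [mem_filter, mem_range]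
    grind
  rw [hcount]
  exact Nat.nth_count (.inl hm)

lemma exists_strictMono_sgnExp {n q : ℕ} (v : Fin q → Fin n →₀ ℕ) :
    ∃ g : Fin n → ℕ → ℕ, (∀ i, StrictMono (g i)) ∧ ∀ k i, g i (sgnExp v k i) = v k i := by
  choose g hg hgV using fun i => exists_strictMono_apply_card_filter_lt (univ.image fun k => v k i)
  exact ⟨g, hg, fun k i => hgV i _ (mem_image_of_mem _ (mem_univ k))⟩

lemma mem_monIdeal_iff {K : Type} [Field K] {n q : ℕ} {v : Fin q → Fin n →₀ ℕ}
    {f : MvPolynomial (Fin n) K} :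
    f ∈ monIdeal K v ↔ ∀ a, coeff a f ≠ 0 → a ∈ upperClosure (Set.range v) := by
  rw [monIdeal, ← Function.comp_def (fun a => monomial a (1 : K)) v, Set.range_comp,
    mem_ideal_span_monomial_image]
  simp [mem_upperClosure]

end MonomialIdeal

end SignatureRegularity

namespace MinFreeRes

open Finset SignatureRegularity

/-- The degree shift of a basis element of a graded free module of a resolution. -/
def resDeg {b : ℕ → ℕ → ℕ} {k : ℕ} (e : resBas b k) : ℕ := e.1

variable {K : Type} [Field K] {n q : ℕ} {I : Ideal (MvPolynomial (Fin n) K)}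
  {v : Fin q → Fin n →₀ ℕ} (F : MinFreeRes K n I) (k j p : ℕ)

lemma resMap_D_mem_degreePart (P : Set ℕ) {f : resBas F.b (k + 1) →₀ MvPolynomial (Fin n) K}
    (hf : f ∈ degreePart K resDeg P) :
    resMap (F.D k) f ∈ degreePart K resDeg P := by
  refine linearCombination_mem_degreePart (fun e => mem_degreePart_iff.2 fun e' a ha => ?_) hf
  obtain h | ⟨hlt, hhom⟩ := F.hhom k e e'
  · exact absurd (h ▸ coeff_zero a) ha
  · have : a.degree = e.1 - e'.1 := of_not_not fun h => ha (hhom.coeff_eq_zero h)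
    rw [resDeg, resDeg, Set.mem_singleton_iff]
    lia

lemma coeff_zero_of_resMap_D_eq_zero {f : resBas F.b (k + 1) →₀ MvPolynomial (Fin n) K}
    (hf : resMap (F.D k) f = 0) (e : resBas F.b (k + 1)) : coeff 0 (f e) = 0 := by
  rw [← LinearMap.mem_ker, ← F.hexact k] at hf
  obtain ⟨g, rfl⟩ := hf
  refine coeff_zero_linearCombination (fun e e' => ?_) g e
  obtain h | ⟨hlt, hhom⟩ := F.hhom (k + 1) e e'
  · simp [h]
  · exact hhom.coeff_eq_zero (by simpa using (Nat.sub_pos_of_lt hlt).ne)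

lemma koszulStrand_inf_ker_resMap_D (S : Finset (Fin n)) :
    koszulStrand K resDeg j S ⊓ (resMap (F.D k)).toAddMonoidHom.ker =
      (koszulStrand K resDeg j S).map (resMap (F.D (k + 1))).toAddMonoidHom := by
  rw [koszulStrand, koszulStrand, map_degreePart _ fun P f => F.resMap_D_mem_degreePart (k + 1) P]
  refine congrArg _ (AddSubgroup.ext fun f => ?_)
  exact SetLike.ext_iff.1 (F.hexact k).symm f

theorem koszulExactAt_map_iff_b_eq_zero {N : Type} [AddCommGroup N]
    [Module (MvPolynomial (Fin n) K) N]
    (φ : (resBas F.b (k + 1) →₀ MvPolynomial (Fin n) K) →ₗ[MvPolynomial (Fin n) K] N)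
    (hφ : LinearMap.ker φ = LinearMap.ker (resMap (F.D k))) :
    KoszulExactAt (X : Fin n → MvPolynomial (Fin n) K)
      (fun S => (koszulStrand K resDeg j S).map φ.toAddMonoidHom) p ↔
      F.b (k + p + 1) j = 0 := by
  have hmin (f) (hf : φ f = 0) (e) : coeff 0 (f e) = 0 :=
    F.coeff_zero_of_resMap_D_eq_zero k (LinearMap.mem_ker.1 (hφ ▸ LinearMap.mem_ker.2 hf)) e
  induction p generalizing k N with
  | zero =>
    rw [koszulExactAt_map_koszulStrand_zero_iff φ hmin]
    refine ⟨fun h => of_not_not fun hne => h ⟨j, 0, Nat.pos_of_ne_zero hne⟩ rfl, ?_⟩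
    rintro h ⟨_, t⟩ rfl
    exact (h ▸ t).elim0
  | succ p ih =>
    have hker : φ.toAddMonoidHom.ker = (resMap (F.D k)).toAddMonoidHom.ker :=
      AddSubgroup.ext fun f => SetLike.ext_iff.1 hφ f
    refine (koszulExactAt_map_koszulStrand_succ_iff φ hmin).trans ?_
    simp only [hker, koszulStrand_inf_ker_resMap_D]
    rw [← add_assoc, add_right_comm k p 1]
    exact ih (k + 1) (resMap (F.D (k + 1))) rfl fun f hf =>
      F.coeff_zero_of_resMap_D_eq_zero (k + 1) hf

/-- `F_0 = R` has a single basis element, of degree `0`. -/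
instance uniqueResBasZero : Unique (resBas F.b 0) where
  default := ⟨0, 0, by simp [F.hb0]⟩
  uniq := by
    rintro ⟨d, t⟩
    obtain rfl : d = 0 := of_not_not fun hd => (by simpa [F.hb0, hd] using t.pos : False)
    have : Subsingleton (Fin (F.b 0 0)) := Fin.subsingleton_iff_le_one.2 (by simp [F.hb0])
    exact congrArg (Sigma.mk 0) (Subsingleton.elim _ _)

lemma mem_range_resMap_D_zero_iff {g : resBas F.b 0 →₀ MvPolynomial (Fin n) K} :
    g ∈ LinearMap.range (resMap (F.D 0)) ↔ g default ∈ I := by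
  rw [F.hexact0, LinearMap.mem_ker, Finsupp.linearCombination_unique,
    ← Algebra.algebraMap_eq_smul_one, Ideal.Quotient.algebraMap_eq, Ideal.Quotient.eq_zero_iff_mem]

/-- The augmented differential `F_1 → F_0 = R` of a resolution of `R/I`. -/
noncomputable def augD : (resBas F.b (0 + 1) →₀ MvPolynomial (Fin n) K) →ₗ[MvPolynomial (Fin n) K]
    MvPolynomial (Fin n) K :=
  Finsupp.lapply default ∘ₗ resMap (F.D 0)

lemma ker_augD : LinearMap.ker F.augD = LinearMap.ker (resMap (F.D 0)) := by
  refine LinearMap.ker_comp_of_ker_eq_bot _ (LinearMap.ker_eq_bot'.2 fun g hg => ?_)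
  exact Finsupp.unique_ext hg

lemma map_augD_koszulStrand (F : MinFreeRes K n (monIdeal K v)) (S : Finset (Fin n)) :
    (koszulStrand K resDeg j S).map F.augD.toAddMonoidHom =
      monomialPart K (upperClosure (Set.range v)) j S := by
  have hmap : (koszulStrand K resDeg j S).map (resMap (F.D 0)).toAddMonoidHom =
      koszulStrand K resDeg j S ⊓ (resMap (F.D 0)).toAddMonoidHom.range :=
    map_degreePart _ fun P f => F.resMap_D_mem_degreePart 0 P
  ext h
  rw [mem_monomialPart_iff]
  constructor
  · rintro ⟨f, hf, rfl⟩
    obtain ⟨hdeg, hI⟩ := hmap.le ⟨f, hf, rfl⟩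
    intro a ha
    exact ⟨mem_monIdeal_iff.1 (F.mem_range_resMap_D_zero_iff.1 hI) a ha,
      mem_koszulStrand_iff.1 hdeg default a ha⟩
  · intro hh
    have hmem : Finsupp.single default h ∈ koszulStrand K resDeg j S ⊓
        (resMap (F.D 0)).toAddMonoidHom.range :=
      ⟨single_mem_degreePart fun a ha => (hh a ha).2,
        F.mem_range_resMap_D_zero_iff.2 (by
          simpa using mem_monIdeal_iff.2 fun a ha => (hh a ha).1)⟩
    obtain ⟨f, hf, hfh⟩ := hmap.ge hmem
    exact ⟨f, hf, (congrArg (· default) hfh).trans Finsupp.single_eq_same⟩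

theorem b_succ_eq_zero_iff (F : MinFreeRes K n (monIdeal K v)) :
    F.b (p + 1) j = 0 ↔ ∀ α : Fin n →₀ ℕ, α.degree = j →
      KoszulExactAt (1 : Fin n → K)
        (faceCoeffs K (upperKoszul (upperClosure (Set.range v)) α)) p := by
  rw [← koszulExactAt_monomialPart_iff, ← zero_add p,
    ← F.koszulExactAt_map_iff_b_eq_zero 0 j p F.augD F.ker_augD]
  simp only [map_augD_koszulStrand, zero_add]

lemma reg_le_reg {J : Ideal (MvPolynomial (Fin n) K)} (G : MinFreeRes K n J)
    (h : ∀ k j, G.b k j ≠ 0 → ∃ j', j ≤ j' ∧ F.b k j' ≠ 0) :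
    G.reg ≤ F.reg := by
  have hbdd : BddAbove {d : ℤ | ∃ k j : ℕ, F.b k j ≠ 0 ∧ d = (j : ℤ) - (k : ℤ)} := by
    refine ((F.hfin.image fun kj => (kj.2 : ℤ) - kj.1).subset ?_).bddAbove
    rintro _ ⟨k, j, hkj, rfl⟩
    exact ⟨(k, j), hkj, rfl⟩
  refine csSup_le ⟨0, 0, 0, by simp [G.hb0], by simp⟩ ?_
  rintro _ ⟨k, j, hkj, rfl⟩
  obtain ⟨j', hjj', hkj'⟩ := h k j hkj
  exact le_csSup_of_le hbdd ⟨k, j', hkj', rfl⟩ (by lia)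

theorem reg_le_reg_of_strictMono {w : Fin q → Fin n →₀ ℕ} {g : Fin n → ℕ → ℕ}
    (hg : ∀ i, StrictMono (g i)) (hgw : ∀ k i, g i (w k i) = v k i)
    (F : MinFreeRes K n (monIdeal K v)) (G : MinFreeRes K n (monIdeal K w)) :
    G.reg ≤ F.reg := by
  refine F.reg_le_reg G fun p j hG => ?_
  obtain _ | p := p
  · exact ⟨j, le_rfl, by rwa [F.hb0, ← G.hb0]⟩
  · rw [Ne, b_succ_eq_zero_iff] at hG
    push Not at hG
    obtain ⟨β, rfl, hβ⟩ := hG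
    let α : Fin n →₀ ℕ := Finsupp.equivFunOnFinite.symm fun i => g i (β i)
    rw [upperKoszul_eq_of_strictMono hg hgw (α := α) fun i => rfl] at hβ
    refine ⟨α.degree, ?_, fun hF => hβ ((F.b_succ_eq_zero_iff _ _).1 hF α rfl)⟩
    exact Finsupp.degree_mono fun i => (hg i).le_apply

end MinFreeRes

theorem reg_quot_sgn_le_reg_quot_general (K : Type) [Field K] (n q : ℕ) (v : Fin q → Fin n →₀ ℕ)
    (I : Ideal (MvPolynomial (Fin n) K)) (hI : I = monIdeal K v)
    (F : MinFreeRes K n I) (G : MinFreeRes K n (monIdeal K (sgnExp v))) :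
    G.reg ≤ F.reg := by
  subst hI
  obtain ⟨g, hg, hgv⟩ := SignatureRegularity.exists_strictMono_sgnExp v
  exact F.reg_le_reg_of_strictMono hg hgv G

/-- **Signature invariants of monomial ideals** (Theorem: regularity).
Let `I` be a monomial ideal of `R = K[x_1,…,x_n]` that is not a principal ideal, with
minimal monomial generating set `G(I) = {x^{v_1},…,x^{v_q}}`.  Then
`reg(R/I) ≥ reg(R/sgn(I))`, where the regularity is computed from (any) minimal graded
free resolution. -/
theorem reg_quot_sgn_le_reg_quot (K : Type) [Field K] (n q : ℕ)
    (v : Fin q → Fin n →₀ ℕ) (hv : AntichainFam v)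
    (I : Ideal (MvPolynomial (Fin n) K)) (hI : I = monIdeal K v)
    (hnp : ¬ Submodule.IsPrincipal I)
    (F : MinFreeRes K n I) (G : MinFreeRes K n (monIdeal K (sgnExp v))) :
    G.reg ≤ F.reg :=
  reg_quot_sgn_le_reg_quot_general K n q v I hI F G
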